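/- arXiv:2202.03279 — 3 statements merged into one kernel-verified Lean document; each statement's English description precedes it below -/
import Mathlib

section
/- Let N ≥ 1, m > k ≥ 1, n ≥ 1 and h₁,…,h_n > 0. Let p₀,…,p_{N−1} be a basis of the polynomials of degree ≤ N−1 on [0,1], p̄₀ = 1 and p̄ᵢ(τ) = ∫₀^τ p_{i−1}(σ)dσ for i = 1,…,N. Let (σᵢ,γᵢ)_{i=1..N} be any quadrature with positive weights exact for degree 2N−2 and (σ̄ᵢ,γ̄ᵢ)_{i=1..N+1} any quadrature with positive weights exact for degree 2N. With V, V̄, V̊, Γ, Γ̄ defined by V_{iα} = p_{α−1}(σᵢ), V̄_{iα} = p̄_{α−1}(σ̄ᵢ), V̊_{iα} = p̄′_{α−1}(σ̄ᵢ), Γ = diag(γᵢ^{1/2}), Γ̄ = diag(γ̄ᵢ^{1/2}), set U_j = blockdiag(I_k ⊗ h_j^{3/2}Γ̄V̄, I_{m−k} ⊗ h_j^{1/2}ΓV), 𝒰 = blockdiag(U₁,…,U_n), and Û_j = blockdiag(I_k ⊗ [h_j^{3/2}Γ̄V̄ stacked above h_j^{1/2}Γ̄V̊], I_{m−k} ⊗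 h_j^{1/2}ΓV), 𝒰̂ = blockdiag(Û₁,…,Û_n). Then the matrices 𝒰ᵀ𝒰 and 𝒰̂ᵀ𝒰̂ are independent of the choice of the quadrature nodes and weights (among rules with the stated exactness and positive weights), and both are symmetric positive definite; in particular all singular values of 𝒰 and 𝒰̂ are positive. -/
/-!
Exactness identifies every Gram matrix of sampled polynomials with the corresponding Gram matrix
for the inner product of `L²[0, 1]`: since `p̄ᵢ` has degree at most `N`, a product `p̄ᵢ p̄ⱼ` has
degree at most `2N`, so `(Γ̄V̄)ᵀ(Γ̄V̄)` has entries `∫₀¹ p̄ᵢ p̄ⱼ`, and likewise for `ΓV` and `Γ̄V̊`.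
The diagonal blocks of `𝒰ᵀ𝒰` and `𝒰̂ᵀ𝒰̂` are thus `h³ G(p̄)`, respectively `h³ G(p̄) + h G(p̄′)`,
and `h G(p)`, where `G` denotes the `L²` Gram matrix; no node or weight occurs in them.  A Gram
matrix is positive semidefinite, and definite if the family is linearly independent.  The `p̄ᵢ`
inherit independence from the `pᵢ`; the `p̄′ᵢ` do not, as `p̄′₀ = 0`, but `G(p̄′)` only needs to be
semidefinite.
-/

open MeasureTheory Matrix Polynomial
open scoped BigOperators

/-- `p̄₀ = 1`, `p̄ᵢ(τ) = ∫₀^τ p_{i-1}(σ) dσ`. -/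
noncomputable def pbarEval (p : ℕ → Polynomial ℝ) : ℕ → ℝ → ℝ
  | 0, _ => 1
  | i + 1, τ => ∫ s in (0:ℝ)..τ, (p i).eval s

/-- A quadrature rule on `[0,1]` with nodes `0 ≤ σ₁ < … < σ_M ≤ 1` and positive weights,
exact for all polynomials of degree `≤ d`. -/
def IsQuad {M : ℕ} (σ γ : Fin M → ℝ) (d : ℕ) : Prop :=
  (∀ i, σ i ∈ Set.Icc (0:ℝ) 1) ∧ StrictMono σ ∧ (∀ i, 0 < γ i) ∧
    ∀ q : Polynomial ℝ, q.natDegree ≤ d →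
      ∑ i, γ i * q.eval (σ i) = ∫ s in (0:ℝ)..1, q.eval s

/-- Row/column index type for the block matrix `𝒰`: block `j`, then either a
"differential" index `(κ, i)` with `i : Fin (N+1)` or an "algebraic" index with `i : Fin N`. -/
abbrev UIdx (N m k n : ℕ) := Fin n × (Fin k × Fin (N + 1) ⊕ Fin (m - k) × Fin N)

/-- Row index type for `𝒰̂`: in each differential block the rows of `h^{3/2}Γ̄V̄`
are stacked above the rows of `h^{1/2}Γ̄V̊`. -/
abbrev UhIdx (N m k n : ℕ) := Fin n × (Fin k × (Fin (N + 1) ⊕ Fin (N + 1)) ⊕ Fin (m - k) × Fin N)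

/-- `𝒰 = blockdiag(U₁,…,U_n)`, `U_j = blockdiag(I_k ⊗ h_j^{3/2}Γ̄V̄, I_{m-k} ⊗ h_j^{1/2}ΓV)`. -/
noncomputable def Umat (N m k n : ℕ) (p : ℕ → Polynomial ℝ) (h : Fin n → ℝ)
    (σ γ : Fin N → ℝ) (σb γb : Fin (N + 1) → ℝ) :
    Matrix (UIdx N m k n) (UIdx N m k n) ℝ :=
  Matrix.of fun x y =>
    match x, y with
    | (j, Sum.inl (κ, i)), (j', Sum.inl (κ', α)) =>
        if j = j' ∧ κ = κ' then
          h j ^ ((3:ℝ)/2) * Real.sqrt (γb i) * pbarEval p (α : ℕ) (σb i) else 0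
    | (j, Sum.inr (κ, i)), (j', Sum.inr (κ', α)) =>
        if j = j' ∧ κ = κ' then
          h j ^ ((1:ℝ)/2) * Real.sqrt (γ i) * (p (α : ℕ)).eval (σ i) else 0
    | _, _ => 0

/-- `𝒰̂ = blockdiag(Û₁,…,Û_n)`, where `Û_j` has the blocks `h_j^{3/2}Γ̄V̄` stacked above
`h_j^{1/2}Γ̄V̊` in the differential part (`V̊_{iα} = p̄'_{α-1}(σ̄ᵢ)`), and
`I_{m-k} ⊗ h_j^{1/2}ΓV` in the algebraic part. -/
noncomputable def Uhmat (N m k n : ℕ) (p : ℕ → Polynomial ℝ) (h : Fin n → ℝ)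
    (σ γ : Fin N → ℝ) (σb γb : Fin (N + 1) → ℝ) :
    Matrix (UhIdx N m k n) (UIdx N m k n) ℝ :=
  Matrix.of fun x y =>
    match x, y with
    | (j, Sum.inl (κ, Sum.inl i)), (j', Sum.inl (κ', α)) =>
        if j = j' ∧ κ = κ' then
          h j ^ ((3:ℝ)/2) * Real.sqrt (γb i) * pbarEval p (α : ℕ) (σb i) else 0
    | (j, Sum.inl (κ, Sum.inr i)), (j', Sum.inl (κ', α)) =>
        if j = j' ∧ κ = κ' then
          h j ^ ((1:ℝ)/2) * Real.sqrt (γb i) * deriv (pbarEval p (α : ℕ)) (σb i) else 0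
    | (j, Sum.inr (κ, i)), (j', Sum.inr (κ', α)) =>
        if j = j' ∧ κ = κ' then
          h j ^ ((1:ℝ)/2) * Real.sqrt (γ i) * (p (α : ℕ)).eval (σ i) else 0
    | _, _ => 0

/-- `s` is a singular value of `A`: `s ≥ 0` and `s²` is an eigenvalue of `AᵀA`. -/
def IsSingVal {I J : Type} [Fintype I] [Fintype J] (A : Matrix I J ℝ) (s : ℝ) : Prop :=
  0 ≤ s ∧ ∃ v : J → ℝ, v ≠ 0 ∧ (Aᵀ * A).mulVec v = s ^ 2 • v

open scoped Kronecker

section BlockMatrices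

section PosDef

variable {m n o R : Type*} [Finite m] [Finite n] [Finite o] [Ring R] [PartialOrder R]
  [StarRing R] [IsOrderedCancelAddMonoid R]

lemma posDef_blockDiagonal [DecidableEq o] {A : o → Matrix n n R} (hA : ∀ j, (A j).PosDef) :
    (blockDiagonal A).PosDef := by
  have := Fintype.ofFinite n
  have := Fintype.ofFinite o
  refine .of_dotProduct_mulVec_pos ?_ fun x hx => ?_
  · rw [IsHermitian, blockDiagonal_conjTranspose]
    exact congrArg blockDiagonal (funext fun j => (hA j).isHermitian)
  let slice (j : o) : n → R := fun i => x (i, j)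
  have quadForm_eq : star x ⬝ᵥ (blockDiagonal A *ᵥ x)
      = ∑ j, star (slice j) ⬝ᵥ (A j *ᵥ slice j) := by
    simp [slice, dotProduct, mulVec, blockDiagonal_apply, Fintype.sum_prod_type_right]
  obtain ⟨⟨i, j⟩, hij⟩ := Function.ne_iff.1 hx
  rw [quadForm_eq]
  exact Finset.sum_pos' (fun j _ => (hA j).posSemidef.dotProduct_mulVec_nonneg _)
    ⟨j, Finset.mem_univ j, (hA j).dotProduct_mulVec_pos fun h => hij (congrFun h i)⟩

lemma posDef_fromBlocks_zero {A : Matrix m m R} {B : Matrix n n R} (hA : A.PosDef)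
    (hB : B.PosDef) : (fromBlocks A 0 0 B).PosDef := by
  have := Fintype.ofFinite m
  have := Fintype.ofFinite n
  refine .of_dotProduct_mulVec_pos ?_ fun x hx => ?_
  · exact hA.isHermitian.fromBlocks conjTranspose_zero hB.isHermitian
  have quadForm_eq : star x ⬝ᵥ (fromBlocks A 0 0 B *ᵥ x)
      = star (x ∘ Sum.inl) ⬝ᵥ (A *ᵥ (x ∘ Sum.inl))
        + star (x ∘ Sum.inr) ⬝ᵥ (B *ᵥ (x ∘ Sum.inr)) := by
    simp [fromBlocks_mulVec, dotProduct]
  rw [quadForm_eq]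
  obtain ⟨i | i, hi⟩ := Function.ne_iff.1 hx
  · exact add_pos_of_pos_of_nonneg (hA.dotProduct_mulVec_pos fun h => hi (congrFun h i))
      (hB.posSemidef.dotProduct_mulVec_nonneg _)
  · exact add_pos_of_nonneg_of_pos (hA.posSemidef.dotProduct_mulVec_nonneg _)
      (hB.dotProduct_mulVec_pos fun h => hi (congrFun h i))

lemma posDef_one_kronecker [DecidableEq o] {A : Matrix n n R} (hA : A.PosDef) :
    ((1 : Matrix o o R) ⊗ₖ A).PosDef := by
  rw [one_kronecker, reindex_apply]
  exact (posDef_blockDiagonal fun _ => hA).submatrix (Equiv.injective _)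

end PosDef

lemma transpose_smul_mul_smul_self {r c R : Type*} [Fintype r] [CommSemiring R] (a : R)
    (A : Matrix r c R) : (a • A)ᵀ * (a • A) = a ^ 2 • (Aᵀ * A) := by
  rw [transpose_smul, Matrix.smul_mul, Matrix.mul_smul, smul_smul, sq]

lemma transpose_fromRows_mul_fromRows_self {r₁ r₂ c R : Type*} [Fintype r₁] [Fintype r₂]
    [Semiring R] (A : Matrix r₁ c R) (B : Matrix r₂ c R) :
    (fromRows A B)ᵀ * fromRows A B = Aᵀ * A + Bᵀ * B := by
  rw [transpose_fromRows, fromCols_mul_fromRows]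

variable {ν r₁ r₂ c₁ c₂ R : Type*} [DecidableEq ν]

/-- The matrix `blockdiag_j (blockdiag (I_κ ⊗ A_j, I_μ ⊗ B_j))`, the common shape of `𝒰`, `𝒰̂` and
their Gram matrices.  The swaps put the block index `j` first, where `blockDiagonal` has it last. -/
def stepBlockDiagonal (κ μ : Type*) [DecidableEq κ] [DecidableEq μ] [Semiring R]
    (A : ν → Matrix r₁ c₁ R) (B : ν → Matrix r₂ c₂ R) :
    Matrix (ν × (κ × r₁ ⊕ μ × r₂)) (ν × (κ × c₁ ⊕ μ × c₂)) R :=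
  (blockDiagonal fun j =>
    fromBlocks ((1 : Matrix κ κ R) ⊗ₖ A j) 0 0 ((1 : Matrix μ μ R) ⊗ₖ B j)).submatrix
      Prod.swap Prod.swap

lemma stepBlockDiagonal_transpose_mul_self {κ μ : Type*} [DecidableEq κ] [DecidableEq μ]
    [Fintype ν] [Fintype κ] [Fintype μ] [Fintype r₁] [Fintype r₂] [CommSemiring R]
    (A : ν → Matrix r₁ c₁ R) (B : ν → Matrix r₂ c₂ R) :
    (stepBlockDiagonal κ μ A B)ᵀ * stepBlockDiagonal κ μ A B
      = stepBlockDiagonal κ μ (fun j => (A j)ᵀ * A j) (fun j => (B j)ᵀ * B j) := by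
  have submatrix_mul (M : Matrix ((κ × c₁ ⊕ μ × c₂) × ν) ((κ × r₁ ⊕ μ × r₂) × ν) R)
      (M' : Matrix ((κ × r₁ ⊕ μ × r₂) × ν) ((κ × c₁ ⊕ μ × c₂) × ν) R) :
      M.submatrix Prod.swap Prod.swap * M'.submatrix Prod.swap Prod.swap
        = (M * M').submatrix (Prod.swap : ν × (κ × c₁ ⊕ μ × c₂) → _) Prod.swap :=
    submatrix_mul_equiv M M' _ (Equiv.prodComm ν (κ × r₁ ⊕ μ × r₂)) _
  simp only [stepBlockDiagonal, transpose_submatrix, submatrix_mul, blockDiagonal_transpose,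
    ← blockDiagonal_mul, fromBlocks_transpose, fromBlocks_multiply, ← kroneckerMap_transpose,
    ← mul_kronecker_mul, transpose_one, transpose_zero, Matrix.mul_zero, Matrix.zero_mul,
    Matrix.one_mul, add_zero, zero_add]

lemma posDef_stepBlockDiagonal {κ μ : Type*} [DecidableEq κ] [DecidableEq μ]
    [Finite ν] [Finite κ] [Finite μ] [Finite c₁] [Finite c₂]
    [Ring R] [PartialOrder R] [StarRing R] [IsOrderedCancelAddMonoid R]
    {A : ν → Matrix c₁ c₁ R} {B : ν → Matrix c₂ c₂ R}
    (hA : ∀ j, (A j).PosDef) (hB : ∀ j, (B j).PosDef) :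
    (stepBlockDiagonal κ μ A B).PosDef :=
  (posDef_blockDiagonal fun j =>
    posDef_fromBlocks_zero (posDef_one_kronecker (hA j)) (posDef_one_kronecker (hB j))).submatrix
      Prod.swap_injective

end BlockMatrices

lemma IsSingVal.pos {I J : Type} [Fintype I] [Fintype J] {A : Matrix I J ℝ} {s : ℝ}
    (hs : IsSingVal A s) (hA : (Aᵀ * A).PosDef) : 0 < s := by
  obtain ⟨hs0, v, hv, hAv⟩ := hs
  refine hs0.lt_of_ne' fun h => (hA.dotProduct_mulVec_pos hv).ne' ?_
  simp [hAv, h]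

section PolynomialGram

variable {ι : Type*}

/-- The Gram matrix of a family of polynomials for the inner product of `L²[a, b]`, the
value that exact quadrature gives to the Gram matrix of the sampled polynomials. -/
noncomputable def polyGram (a b : ℝ) (P : ι → ℝ[X]) : Matrix ι ι ℝ :=
  Matrix.of fun i j => ∫ s in a..b, (P i * P j).eval s

lemma isHermitian_polyGram (a b : ℝ) (P : ι → ℝ[X]) : (polyGram a b P).IsHermitian := by
  ext i j
  simp [polyGram, mul_comm]

lemma dotProduct_polyGram_mulVec [Fintype ι] (a b : ℝ) (P : ι → ℝ[X]) (v : ι → ℝ) :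
    v ⬝ᵥ (polyGram a b P *ᵥ v) = ∫ s in a..b, (∑ i, v i • P i).eval s ^ 2 := by
  have integrable (q : ℝ[X]) : IntervalIntegrable q.eval volume a b :=
    q.continuous.intervalIntegrable a b
  have expand (s : ℝ) : (∑ i, v i • P i).eval s ^ 2
      = ∑ i, ∑ j, (C (v i * v j) * (P i * P j)).eval s := by
    simp only [sq, eval_finsetSum, Finset.sum_mul_sum, eval_smul, smul_eq_mul, eval_mul, eval_C]
    exact Finset.sum_congr rfl fun i _ => Finset.sum_congr rfl fun j _ => by ring
  simp_rw [expand]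
  rw [intervalIntegral.integral_finsetSum fun i _ => by
    simpa only [eval_finsetSum] using integrable (∑ j, C (v i * v j) * (P i * P j))]
  simp_rw [intervalIntegral.integral_finsetSum fun _ _ => integrable _]
  simp only [eval_mul (p := C _), eval_C, intervalIntegral.integral_const_mul, polyGram, of_apply,
    dotProduct, mulVec, Finset.mul_sum]
  exact Finset.sum_congr rfl fun i _ => Finset.sum_congr rfl fun j _ => by ring

lemma posSemidef_polyGram [Finite ι] {a b : ℝ} (hab : a ≤ b) (P : ι → ℝ[X]) :
    (polyGram a b P).PosSemidef := by
  have := Fintype.ofFinite ι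
  refine .of_dotProduct_mulVec_nonneg (isHermitian_polyGram a b P) fun v => ?_
  rw [star_trivial, dotProduct_polyGram_mulVec]
  exact intervalIntegral.integral_nonneg hab fun s _ => sq_nonneg _

lemma integral_eval_sq_pos {a b : ℝ} (hab : a < b) {q : ℝ[X]} (hq : q ≠ 0) :
    0 < ∫ s in a..b, q.eval s ^ 2 := by
  obtain ⟨c, hc, hqc⟩ : ∃ c ∈ Set.Icc a b, q.eval c ≠ 0 := by
    by_contra! h
    exact hq (q.eq_zero_of_infinite_isRoot ((Set.Icc_infinite hab).mono h))
  exact intervalIntegral.integral_pos hab (q.continuous.pow 2).continuousOn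
    (fun s _ => sq_nonneg _) ⟨c, hc, by positivity⟩

lemma posDef_polyGram [Finite ι] {a b : ℝ} (hab : a < b) {P : ι → ℝ[X]}
    (hP : LinearIndependent ℝ P) : (polyGram a b P).PosDef := by
  have := Fintype.ofFinite ι
  refine .of_dotProduct_mulVec_pos (isHermitian_polyGram a b P) fun v hv => ?_
  rw [star_trivial, dotProduct_polyGram_mulVec]
  refine integral_eval_sq_pos hab fun h => hv ?_
  exact funext (Fintype.linearIndependent_iff.1 hP v h)

/-- The matrix `ΓV` of a quadrature with nodes `σ` and weights `γ`: the polynomials sampled at the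
nodes, with rows scaled by the square roots of the weights. -/
noncomputable def weightedVandermonde {κ : Type*} (σ γ : κ → ℝ) (P : ι → ℝ[X]) : Matrix κ ι ℝ :=
  Matrix.of fun i α => √(γ i) * (P α).eval (σ i)

lemma IsQuad.weightedVandermonde_transpose_mul_self {M d : ℕ} {σ γ : Fin M → ℝ}
    (hq : IsQuad σ γ d) {P : ι → ℝ[X]} (hP : ∀ α β, (P α).natDegree + (P β).natDegree ≤ d) :
    (weightedVandermonde σ γ P)ᵀ * weightedVandermonde σ γ P = polyGram 0 1 P := by
  obtain ⟨-, -, hγ, hexact⟩ := hq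
  ext α β
  rw [polyGram, of_apply, ← hexact (P α * P β) (natDegree_mul_le.trans (hP α β)), mul_apply]
  simp only [transpose_apply, weightedVandermonde, of_apply, eval_mul]
  refine Finset.sum_congr rfl fun i _ => ?_
  linear_combination (P α).eval (σ i) * (P β).eval (σ i) * Real.mul_self_sqrt (hγ i).le

end PolynomialGram

section Antiderivative

/-- The antiderivative of `q` that vanishes at `0`, a polynomial form of `τ ↦ ∫₀^τ q`.  In positive
characteristic the terms with `n + 1 = 0` in `K` are dropped, as `a / 0 = 0`. -/
noncomputable def antiderivative {K : Type*} [Field K] (q : K[X]) : K[X] :=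
  q.sum fun n a => monomial (n + 1) (a / (n + 1))

lemma derivative_antiderivative {K : Type*} [Field K] [CharZero K] (q : K[X]) :
    derivative (antiderivative q) = q := by
  have (n : ℕ) : (n + 1 : K) ≠ 0 := n.cast_add_one_ne_zero
  simp [antiderivative, Polynomial.sum_def, this, ← as_sum_support]

lemma eval_zero_antiderivative {K : Type*} [Field K] (q : K[X]) :
    (antiderivative q).eval 0 = 0 := by
  simp [antiderivative, Polynomial.sum_def, eval_finsetSum]

lemma natDegree_antiderivative_le {K : Type*} [Field K] (q : K[X]) :
    (antiderivative q).natDegree ≤ q.natDegree + 1 :=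
  natDegree_sum_le_of_forall_le _ _ fun n hn =>
    (natDegree_monomial_le _).trans (by gcongr; exact le_natDegree_of_mem_supp n hn)

lemma integral_eval_eq_eval_antiderivative (q : ℝ[X]) (t : ℝ) :
    ∫ s in (0 : ℝ)..t, q.eval s = (antiderivative q).eval t := by
  have hderiv (s : ℝ) : HasDerivAt (antiderivative q).eval (q.eval s) s := by
    simpa only [derivative_antiderivative] using (antiderivative q).hasDerivAt s
  rw [intervalIntegral.integral_eq_sub_of_hasDerivAt (fun s _ => hderiv s)
    (q.continuous.intervalIntegrable 0 t), eval_zero_antiderivative, sub_zero]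

end Antiderivative

section IntegratedBasis

/-- The functions `p̄ᵢ` as polynomials, to which exactness of a quadrature applies. -/
noncomputable def pbar (p : ℕ → ℝ[X]) : ℕ → ℝ[X]
  | 0 => 1
  | i + 1 => antiderivative (p i)

variable {p : ℕ → ℝ[X]} {N : ℕ}

lemma pbarEval_eq_eval_pbar (p : ℕ → ℝ[X]) (i : ℕ) : pbarEval p i = (pbar p i).eval := by
  funext t
  cases i with
  | zero => simp [pbarEval, pbar]
  | succ i => exact integral_eval_eq_eval_antiderivative (p i) t

lemma natDegree_pbar_le (hdeg : ∀ i < N, (p i).natDegree ≤ N - 1) (i : Fin (N + 1)) :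
    (pbar p i).natDegree ≤ N := by
  cases i using Fin.cases with
  | zero => simp [pbar]
  | succ i =>
    have := natDegree_antiderivative_le (p i)
    have := hdeg i i.isLt
    simp only [pbar, Fin.val_succ]
    lia

lemma linearIndependent_pbar (hli : LinearIndependent ℝ fun i : Fin N => p i) :
    LinearIndependent ℝ fun i : Fin (N + 1) => pbar p i := by
  rw [Fintype.linearIndependent_iff] at hli ⊢
  intro g hg
  have hcons : g 0 • (1 : ℝ[X]) + ∑ i : Fin N, g i.succ • antiderivative (p i) = 0 := by
    rwa [Fin.sum_univ_succ] at hg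
  have hzero : g 0 = 0 := by
    simpa [eval_finsetSum, eval_zero_antiderivative] using congrArg (eval 0) hcons
  have hsucc : ∀ i : Fin N, g i.succ = 0 :=
    hli _ (by simpa [derivative_antiderivative] using congrArg derivative hcons)
  exact Fin.cases hzero hsucc

end IntegratedBasis

lemma sq_rpow_div_two {x : ℝ} (hx : 0 ≤ x) (y : ℝ) : (x ^ (y / 2)) ^ 2 = x ^ y := by
  rw [← Real.rpow_mul_natCast hx, Nat.cast_ofNat, div_mul_cancel₀ y two_ne_zero]

section CollocationMatrices

variable {N m k n : ℕ} {p : ℕ → ℝ[X]} {h : Fin n → ℝ}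
  {σ γ : Fin N → ℝ} {σb γb : Fin (N + 1) → ℝ}

lemma Umat_eq_stepBlockDiagonal (N m k n : ℕ) (p : ℕ → ℝ[X]) (h : Fin n → ℝ)
    (σ γ : Fin N → ℝ) (σb γb : Fin (N + 1) → ℝ) :
    Umat N m k n p h σ γ σb γb = stepBlockDiagonal (Fin k) (Fin (m - k))
      (fun j => h j ^ (3 / 2 : ℝ) • weightedVandermonde σb γb fun i : Fin (N + 1) => pbar p i)
      (fun j => h j ^ (1 / 2 : ℝ) • weightedVandermonde σ γ fun i : Fin N => p i) := by
  ext ⟨j, ⟨κ, i⟩ | ⟨κ, i⟩⟩ ⟨j', ⟨κ', α⟩ | ⟨κ', α⟩⟩ <;>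
    simp [Umat, stepBlockDiagonal, weightedVandermonde, blockDiagonal_apply, one_apply,
      pbarEval_eq_eval_pbar, ite_and, mul_assoc]

lemma Uhmat_eq_stepBlockDiagonal (N m k n : ℕ) (p : ℕ → ℝ[X]) (h : Fin n → ℝ)
    (σ γ : Fin N → ℝ) (σb γb : Fin (N + 1) → ℝ) :
    Uhmat N m k n p h σ γ σb γb = stepBlockDiagonal (Fin k) (Fin (m - k))
      (fun j => fromRows
        (h j ^ (3 / 2 : ℝ) • weightedVandermonde σb γb fun i : Fin (N + 1) => pbar p i)
        (h j ^ (1 / 2 : ℝ) •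
          weightedVandermonde σb γb fun i : Fin (N + 1) => derivative (pbar p i)))
      (fun j => h j ^ (1 / 2 : ℝ) • weightedVandermonde σ γ fun i : Fin N => p i) := by
  ext ⟨j, ⟨κ, i | i⟩ | ⟨κ, i⟩⟩ ⟨j', ⟨κ', α⟩ | ⟨κ', α⟩⟩ <;>
    simp [Uhmat, stepBlockDiagonal, weightedVandermonde, blockDiagonal_apply, one_apply,
      pbarEval_eq_eval_pbar, ite_and, mul_assoc]

/-- The common value of `𝒰ᵀ𝒰` for all admissible quadratures. -/
noncomputable def exactGram (N m k n : ℕ) (p : ℕ → ℝ[X]) (h : Fin n → ℝ) :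
    Matrix (UIdx N m k n) (UIdx N m k n) ℝ :=
  stepBlockDiagonal (Fin k) (Fin (m - k))
    (fun j => h j ^ 3 • polyGram 0 1 fun i : Fin (N + 1) => pbar p i)
    (fun j => h j • polyGram 0 1 fun i : Fin N => p i)

/-- The common value of `𝒰̂ᵀ𝒰̂` for all admissible quadratures. -/
noncomputable def exactGramHat (N m k n : ℕ) (p : ℕ → ℝ[X]) (h : Fin n → ℝ) :
    Matrix (UIdx N m k n) (UIdx N m k n) ℝ :=
  stepBlockDiagonal (Fin k) (Fin (m - k))
    (fun j => h j ^ 3 • polyGram 0 1 (fun i : Fin (N + 1) => pbar p i)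
      + h j • polyGram 0 1 fun i : Fin (N + 1) => derivative (pbar p i))
    (fun j => h j • polyGram 0 1 fun i : Fin N => p i)

lemma posDef_exactGram (hh : ∀ j, 0 < h j) (hli : LinearIndependent ℝ fun i : Fin N => p i) :
    (exactGram N m k n p h).PosDef :=
  posDef_stepBlockDiagonal
    (fun j => (posDef_polyGram one_pos (linearIndependent_pbar hli)).smul (pow_pos (hh j) 3))
    (fun j => (posDef_polyGram one_pos hli).smul (hh j))

lemma posDef_exactGramHat (hh : ∀ j, 0 < h j) (hli : LinearIndependent ℝ fun i : Fin N => p i) :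
    (exactGramHat N m k n p h).PosDef :=
  posDef_stepBlockDiagonal
    (fun j => ((posDef_polyGram one_pos (linearIndependent_pbar hli)).smul
      (pow_pos (hh j) 3)).add_posSemidef ((posSemidef_polyGram zero_le_one _).smul (hh j).le))
    (fun j => (posDef_polyGram one_pos hli).smul (hh j))

lemma weightedVandermonde_gram_basis (hdeg : ∀ i < N, (p i).natDegree ≤ N - 1)
    (hq : IsQuad σ γ (2 * N - 2)) :
    (weightedVandermonde σ γ fun i : Fin N => p i)ᵀ * weightedVandermonde σ γ (fun i : Fin N => p i)
      = polyGram 0 1 fun i : Fin N => p i :=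
  hq.weightedVandermonde_transpose_mul_self fun α β => by
    have := hdeg α α.isLt
    have := hdeg β β.isLt
    lia

lemma weightedVandermonde_gram_pbar (hdeg : ∀ i < N, (p i).natDegree ≤ N - 1)
    (hqb : IsQuad σb γb (2 * N)) :
    (weightedVandermonde σb γb fun i : Fin (N + 1) => pbar p i)ᵀ
        * weightedVandermonde σb γb (fun i : Fin (N + 1) => pbar p i)
      = polyGram 0 1 fun i : Fin (N + 1) => pbar p i :=
  hqb.weightedVandermonde_transpose_mul_self fun α β => by
    have := natDegree_pbar_le hdeg α
    have := natDegree_pbar_le hdeg β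
    lia

lemma weightedVandermonde_gram_derivative_pbar (hdeg : ∀ i < N, (p i).natDegree ≤ N - 1)
    (hqb : IsQuad σb γb (2 * N)) :
    (weightedVandermonde σb γb fun i : Fin (N + 1) => derivative (pbar p i))ᵀ
        * weightedVandermonde σb γb (fun i : Fin (N + 1) => derivative (pbar p i))
      = polyGram 0 1 fun i : Fin (N + 1) => derivative (pbar p i) :=
  hqb.weightedVandermonde_transpose_mul_self fun α β => by
    have := natDegree_pbar_le hdeg α
    have := natDegree_pbar_le hdeg β
    have := natDegree_derivative_le (pbar p α)
    have := natDegree_derivative_le (pbar p β)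
    lia

lemma Umat_transpose_mul_self (hh : ∀ j, 0 ≤ h j)
    (hdeg : ∀ i < N, (p i).natDegree ≤ N - 1)
    (hq : IsQuad σ γ (2 * N - 2)) (hqb : IsQuad σb γb (2 * N)) :
    (Umat N m k n p h σ γ σb γb)ᵀ * Umat N m k n p h σ γ σb γb = exactGram N m k n p h := by
  simp only [Umat_eq_stepBlockDiagonal, stepBlockDiagonal_transpose_mul_self,
    transpose_smul_mul_smul_self, weightedVandermonde_gram_basis hdeg hq,
    weightedVandermonde_gram_pbar hdeg hqb, sq_rpow_div_two (hh _), Real.rpow_ofNat,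
    Real.rpow_one, exactGram]

lemma Uhmat_transpose_mul_self (hh : ∀ j, 0 ≤ h j)
    (hdeg : ∀ i < N, (p i).natDegree ≤ N - 1)
    (hq : IsQuad σ γ (2 * N - 2)) (hqb : IsQuad σb γb (2 * N)) :
    (Uhmat N m k n p h σ γ σb γb)ᵀ * Uhmat N m k n p h σ γ σb γb
      = exactGramHat N m k n p h := by
  simp only [Uhmat_eq_stepBlockDiagonal, stepBlockDiagonal_transpose_mul_self,
    transpose_fromRows_mul_fromRows_self, transpose_smul_mul_smul_self,
    weightedVandermonde_gram_basis hdeg hq, weightedVandermonde_gram_pbar hdeg hqb,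
    weightedVandermonde_gram_derivative_pbar hdeg hqb, sq_rpow_div_two (hh _), Real.rpow_ofNat,
    Real.rpow_one, exactGramHat]

end CollocationMatrices

theorem stmt1 (N m k n : ℕ) (hN : 1 ≤ N) (hk : 1 ≤ k) (hkm : k < m) (hn : 1 ≤ n)
    (h : Fin n → ℝ) (hh : ∀ j, 0 < h j)
    (p : ℕ → Polynomial ℝ)
    (hdeg : ∀ i < N, (p i).natDegree ≤ N - 1)
    (hli : LinearIndependent ℝ fun i : Fin N => p i)
    (σ γ σ' γ' : Fin N → ℝ) (σb γb σb' γb' : Fin (N + 1) → ℝ)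
    (hq : IsQuad σ γ (2 * N - 2)) (hq' : IsQuad σ' γ' (2 * N - 2))
    (hqb : IsQuad σb γb (2 * N)) (hqb' : IsQuad σb' γb' (2 * N)) :
    ((Umat N m k n p h σ γ σb γb)ᵀ * Umat N m k n p h σ γ σb γb
        = (Umat N m k n p h σ' γ' σb' γb')ᵀ * Umat N m k n p h σ' γ' σb' γb') ∧
    ((Uhmat N m k n p h σ γ σb γb)ᵀ * Uhmat N m k n p h σ γ σb γb
        = (Uhmat N m k n p h σ' γ' σb' γb')ᵀ * Uhmat N m k n p h σ' γ' σb' γb') ∧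
    ((Umat N m k n p h σ γ σb γb)ᵀ * Umat N m k n p h σ γ σb γb).PosDef ∧
    ((Uhmat N m k n p h σ γ σb γb)ᵀ * Uhmat N m k n p h σ γ σb γb).PosDef ∧
    (∀ s, IsSingVal (Umat N m k n p h σ γ σb γb) s → 0 < s) ∧
    (∀ s, IsSingVal (Uhmat N m k n p h σ γ σb γb) s → 0 < s) := by
  have hh0 : ∀ j, 0 ≤ h j := fun j => (hh j).le
  have gramU := Umat_transpose_mul_self (m := m) (k := k) hh0 hdeg hq hqb
  have gramU' := Umat_transpose_mul_self (m := m) (k := k) hh0 hdeg hq' hqb'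
  have gramUh := Uhmat_transpose_mul_self (m := m) (k := k) hh0 hdeg hq hqb
  have gramUh' := Uhmat_transpose_mul_self (m := m) (k := k) hh0 hdeg hq' hqb'
  have posDefU := gramU ▸ posDef_exactGram hh hli
  have posDefUh := gramUh ▸ posDef_exactGramHat hh hli
  exact ⟨gramU.trans gramU'.symm, gramUh.trans gramUh'.symm, posDefU, posDefUh,
    fun s hs => hs.pos posDefU, fun s hs => hs.pos posDefUh⟩
end

section
/- Let P_i denote the i-th Legendre polynomial and define the modified Legendre basis functions p̄₀(τ) = 1 and p̄_i(τ) = P_i(2τ−1) − (−1)^i for i ≥ 1. Then for all integers α, β ≥ 1: ∫₀¹ p̄₀(ρ)² dρ = 1, ∫₀¹ p̄₀(ρ) p̄_α(ρ) dρ = (−1)^{α+1}, and ∫₀¹ p̄_α(ρ) p̄_β(ρ) dρ = δ_{αβ}/(2α+1) + (−1)^{α+β}, where δ_{αβ} is the Kronecker delta. -/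
open MeasureTheory Polynomial
open scoped BigOperators

/-- The `i`-th Legendre polynomial, via Rodrigues' formula
`P_i(x) = (1/(2^i i!)) (d/dx)^i (x²-1)^i`. -/
noncomputable def legendre (i : ℕ) : Polynomial ℝ :=
  Polynomial.C (1 / (2 ^ i * (Nat.factorial i : ℝ))) *
    Polynomial.derivative^[i] ((Polynomial.X ^ 2 - 1) ^ i)

/-- The modified Legendre basis functions: `p̄₀(τ) = 1` and
`p̄ᵢ(τ) = Pᵢ(2τ-1) - (-1)^i` for `i ≥ 1`. -/
noncomputable def mlp (i : ℕ) (τ : ℝ) : ℝ :=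
  if i = 0 then 1 else (legendre i).eval (2 * τ - 1) - (-1) ^ i

/-!
Integrating by parts `n` times against `P_n`, which is a multiple of `(d/dx)^n (x² - 1)^n`, kills
every polynomial of degree less than `n`; this is orthogonality on `[-1, 1]`. For the norm,
`x P_n' - n P_n` has degree less than `n`, so `∫ x (P_n²)' = 2n ∫ P_n²`, while a single integration
by parts gives `∫ x (P_n²)' = P_n(1)² + P_n(-1)² - ∫ P_n² = 2 - ∫ P_n²`. Hence
`(2n + 1) ∫ P_n² = 2`. Substituting `x = 2τ - 1` and expanding `p̄_α p̄_β`, the cross terms are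
multiples of the means of `P_α` and `P_β`, which vanish by orthogonality to constants.
-/

section CommSemiring

variable {R : Type*} [CommSemiring R]

lemma eval_iterate_derivative_pow_eq_zero {p : R[X]} {t : R} (ht : p.IsRoot t) {k n : ℕ}
    (hk : k < n) : (derivative^[k] (p ^ n)).eval t = 0 := by
  have hp : p ∣ derivative^[k] (p ^ n) :=
    (dvd_pow_self p (Nat.sub_ne_zero_of_lt hk)).trans (pow_sub_dvd_iterate_derivative_pow p n k)
  exact ht.dvd hp

lemma eval_iterate_derivative_pow_mul {p : R[X]} {t : R} (ht : p.IsRoot t) (n : ℕ) (q : R[X]) :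
    (derivative^[n] (p ^ n * q)).eval t =
      n.factorial * (derivative p).eval t ^ n * q.eval t := by
  induction n generalizing q with
  | zero => simp
  | succ n ih =>
    have hderiv : derivative (p ^ (n + 1) * q) =
        p ^ n * (C ((n : R) + 1) * derivative p * q + p * derivative q) := by
      rw [derivative_mul, derivative_pow_succ]
      ring
    rw [Function.iterate_succ_apply, hderiv, ih, Nat.factorial_succ]
    simp only [eval_add, eval_mul, eval_C, ht.eq_zero]
    push_cast
    ring

end CommSemiring

lemma degree_X_mul_derivative_sub_lt {R : Type*} [Ring R] {p : R[X]} {n : ℕ}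
    (hp : p.natDegree ≤ n) :
    (X * derivative p - C (n : R) * p).degree < (n : WithBot ℕ) := by
  have hcoeff (m : ℕ) : (X * derivative p - C (n : R) * p).coeff m = (m - n) * p.coeff m := by
    cases m with
    | zero => simp
    | succ m =>
      rw [coeff_sub, coeff_X_mul, coeff_derivative, coeff_C_mul, ← Nat.cast_succ,
        ← Nat.cast_comm, sub_mul]
  rw [degree_lt_iff_coeff_zero]
  intro m hm
  rw [hcoeff]
  rcases hm.eq_or_lt with rfl | hlt
  · rw [sub_self, zero_mul]
  · rw [coeff_eq_zero_of_natDegree_lt (hp.trans_lt hlt), mul_zero]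

section IntegrationByParts

variable {a b : ℝ}

lemma integral_eval_mul_eval_derivative (p q : ℝ[X]) :
    ∫ x in a..b, p.eval x * (derivative q).eval x =
      p.eval b * q.eval b - p.eval a * q.eval a - ∫ x in a..b, (derivative p).eval x * q.eval x :=
  intervalIntegral.integral_mul_deriv_eq_deriv_mul
    (fun x _ => p.hasDerivAt x) (fun x _ => q.hasDerivAt x)
    ((derivative p).continuous.intervalIntegrable _ _)
    ((derivative q).continuous.intervalIntegrable _ _)

lemma integral_eval_mul_eval_iterate_derivative (p : ℝ[X]) {q : ℝ[X]} {n : ℕ}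
    (ha : ∀ k < n, (derivative^[k] q).eval a = 0) (hb : ∀ k < n, (derivative^[k] q).eval b = 0) :
    ∫ x in a..b, p.eval x * (derivative^[n] q).eval x =
      (-1) ^ n * ∫ x in a..b, (derivative^[n] p).eval x * q.eval x := by
  induction n generalizing p with
  | zero => simp
  | succ n ih =>
    rw [Function.iterate_succ_apply', integral_eval_mul_eval_derivative, ha n n.lt_succ_self,
      hb n n.lt_succ_self, ih _ (fun k hk => ha k (hk.trans n.lt_succ_self))
        (fun k hk => hb k (hk.trans n.lt_succ_self)), Function.iterate_succ_apply]
    ring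

end IntegrationByParts

lemma natDegree_legendre_le (n : ℕ) : (legendre n).natDegree ≤ n := by
  have hpow : ((X ^ 2 - 1 : ℝ[X]) ^ n).natDegree ≤ n * 2 :=
    natDegree_pow_le_of_le n (by compute_degree)
  calc (legendre n).natDegree
    _ ≤ (derivative^[n] ((X ^ 2 - 1 : ℝ[X]) ^ n)).natDegree := natDegree_C_mul_le _ _
    _ ≤ ((X ^ 2 - 1 : ℝ[X]) ^ n).natDegree - n := natDegree_iterate_derivative _ n
    _ ≤ n := by omega

lemma eval_legendre_of_sq_eq_one {t : ℝ} (ht : t ^ 2 = 1) (n : ℕ) :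
    (legendre n).eval t = t ^ n := by
  have hroot : (X ^ 2 - 1 : ℝ[X]).IsRoot t := by simp [ht]
  have hrodrigues := eval_iterate_derivative_pow_mul hroot n 1
  have hderiv : (derivative (X ^ 2 - 1 : ℝ[X])).eval t = 2 * t := by
    simp [one_add_one_eq_two]
  rw [mul_one, eval_one, mul_one, hderiv] at hrodrigues
  rw [legendre, eval_C_mul, hrodrigues, mul_pow]
  field_simp

lemma integral_eval_mul_legendre_eq_zero {p : ℝ[X]} {n : ℕ} (hp : p.degree < n) :
    ∫ x in (-1 : ℝ)..1, p.eval x * (legendre n).eval x = 0 := by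
  have hvanish (t : ℝ) (ht : t ^ 2 = 1) (k : ℕ) (hk : k < n) :
      (derivative^[k] ((X ^ 2 - 1 : ℝ[X]) ^ n)).eval t = 0 :=
    eval_iterate_derivative_pow_eq_zero (by simp [ht]) hk
  simp only [legendre, eval_C_mul, mul_left_comm (p.eval _)]
  rw [intervalIntegral.integral_const_mul, integral_eval_mul_eval_iterate_derivative p
    (hvanish (-1) (by norm_num)) (hvanish 1 (by norm_num)),
    iterate_derivative_eq_zero_of_degree_lt hp]
  simp

lemma integral_X_mul_derivative_legendre_mul_legendre (n : ℕ) :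
    ∫ x in (-1 : ℝ)..1, (X * derivative (legendre n)).eval x * (legendre n).eval x =
      n * ∫ x in (-1 : ℝ)..1, (legendre n).eval x ^ 2 := by
  have horth := integral_eval_mul_legendre_eq_zero
    (degree_X_mul_derivative_sub_lt (natDegree_legendre_le n))
  simp only [eval_sub, eval_C_mul, sub_mul, mul_assoc (n : ℝ), ← sq] at horth
  rwa [intervalIntegral.integral_sub (Continuous.intervalIntegrable (by fun_prop) _ _)
    (Continuous.intervalIntegrable (by fun_prop) _ _), intervalIntegral.integral_const_mul,
    sub_eq_zero] at horth

lemma integral_legendre_sq (n : ℕ) :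
    ∫ x in (-1 : ℝ)..1, (legendre n).eval x ^ 2 = 2 / (2 * n + 1) := by
  have hparts := integral_eval_mul_eval_derivative (a := -1) (b := 1) X (legendre n ^ 2)
  have hleft (x : ℝ) : (X : ℝ[X]).eval x * (derivative (legendre n ^ 2)).eval x =
      2 * ((X * derivative (legendre n)).eval x * (legendre n).eval x) := by
    simp only [derivative_sq, eval_mul, eval_C, eval_X]
    ring
  rw [intervalIntegral.integral_congr fun x _ => hleft x] at hparts
  simp only [derivative_X, eval_X, eval_one, one_mul, eval_pow,
    eval_legendre_of_sq_eq_one (one_pow 2), eval_legendre_of_sq_eq_one neg_one_sq,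
    ← pow_mul, one_pow, (even_two.mul_left n).neg_one_pow] at hparts
  rw [intervalIntegral.integral_const_mul,
    integral_X_mul_derivative_legendre_mul_legendre] at hparts
  rw [eq_div_iff (by positivity)]
  linarith

lemma integral_legendre_mul_legendre (m n : ℕ) :
    ∫ x in (-1 : ℝ)..1, (legendre m).eval x * (legendre n).eval x =
      if m = n then 2 / (2 * (m : ℝ) + 1) else 0 := by
  have horth {k l : ℕ} (hkl : k < l) :
      ∫ x in (-1 : ℝ)..1, (legendre k).eval x * (legendre l).eval x = 0 :=
    integral_eval_mul_legendre_eq_zero <|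
      (natDegree_le_iff_degree_le.mp (natDegree_legendre_le k)).trans_lt (by exact_mod_cast hkl)
  rcases lt_trichotomy m n with hlt | rfl | hgt
  · rw [horth hlt, if_neg hlt.ne]
  · simp only [← sq, integral_legendre_sq, if_true]
  · simp only [mul_comm ((legendre m).eval _), horth hgt, if_neg hgt.ne']

lemma integral_comp_two_mul_sub_one {E : Type*} [NormedAddCommGroup E] [NormedSpace ℝ E]
    (f : ℝ → E) :
    ∫ x in (0 : ℝ)..1, f (2 * x - 1) = (2⁻¹ : ℝ) • ∫ x in (-1 : ℝ)..1, f x := by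
  rw [intervalIntegral.integral_comp_mul_sub f two_ne_zero]
  norm_num

lemma integral_shifted_legendre_mul_legendre (m n : ℕ) :
    ∫ x in (0 : ℝ)..1, (legendre m).eval (2 * x - 1) * (legendre n).eval (2 * x - 1) =
      if m = n then 1 / (2 * (m : ℝ) + 1) else 0 := by
  rw [integral_comp_two_mul_sub_one fun x => (legendre m).eval x * (legendre n).eval x,
    integral_legendre_mul_legendre, smul_ite, smul_zero, smul_eq_mul, ← mul_div_assoc,
    inv_mul_cancel₀ two_ne_zero]

lemma integral_shifted_legendre_eq_zero {n : ℕ} (hn : n ≠ 0) :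
    ∫ x in (0 : ℝ)..1, (legendre n).eval (2 * x - 1) = 0 := by
  have hmean := integral_eval_mul_legendre_eq_zero (p := 1) (n := n)
    (degree_one_le.trans_lt (by exact_mod_cast hn.bot_lt))
  simp only [eval_one, one_mul] at hmean
  rw [integral_comp_two_mul_sub_one fun x => (legendre n).eval x, hmean, smul_zero]

lemma integral_sub_const_mul_sub_const {a b : ℝ} {f g : ℝ → ℝ}
    (hf : IntervalIntegrable f volume a b) (hg : IntervalIntegrable g volume a b)
    (hfg : IntervalIntegrable (fun x => f x * g x) volume a b) (c d : ℝ) :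
    ∫ x in a..b, (f x - c) * (g x - d) =
      (∫ x in a..b, f x * g x) - d * (∫ x in a..b, f x) - c * (∫ x in a..b, g x) +
        (b - a) * (c * d) := by
  have hexpand (x : ℝ) : (f x - c) * (g x - d) = f x * g x - d * f x - c * g x + c * d := by ring
  simp only [hexpand]
  rw [intervalIntegral.integral_add ((hfg.sub (hf.const_mul d)).sub (hg.const_mul c)) (by simp),
    intervalIntegral.integral_sub (hfg.sub (hf.const_mul d)) (hg.const_mul c),
    intervalIntegral.integral_sub hfg (hf.const_mul d), intervalIntegral.integral_const_mul,
    intervalIntegral.integral_const_mul, intervalIntegral.integral_const, smul_eq_mul]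

lemma mlp_zero (τ : ℝ) : mlp 0 τ = 1 :=
  if_pos rfl

lemma mlp_of_ne_zero {n : ℕ} (hn : n ≠ 0) (τ : ℝ) :
    mlp n τ = (legendre n).eval (2 * τ - 1) - (-1) ^ n :=
  if_neg hn

lemma integral_mlp {n : ℕ} (hn : n ≠ 0) : ∫ τ in (0 : ℝ)..1, mlp n τ = (-1) ^ (n + 1) := by
  simp only [mlp_of_ne_zero hn]
  rw [intervalIntegral.integral_sub (Continuous.intervalIntegrable (by fun_prop) _ _) (by simp),
    integral_shifted_legendre_eq_zero hn, intervalIntegral.integral_const, smul_eq_mul]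
  ring

lemma integral_mlp_mul_mlp {m n : ℕ} (hm : m ≠ 0) (hn : n ≠ 0) :
    ∫ τ in (0 : ℝ)..1, mlp m τ * mlp n τ =
      (if m = n then 1 / (2 * (m : ℝ) + 1) else 0) + (-1) ^ (m + n) := by
  simp only [mlp_of_ne_zero hm, mlp_of_ne_zero hn]
  rw [integral_sub_const_mul_sub_const (Continuous.intervalIntegrable (by fun_prop) _ _)
      (Continuous.intervalIntegrable (by fun_prop) _ _)
      (Continuous.intervalIntegrable (by fun_prop) _ _),
    integral_shifted_legendre_mul_legendre, integral_shifted_legendre_eq_zero hm,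
    integral_shifted_legendre_eq_zero hn]
  ring

theorem stmt7 :
    ((∫ ρ in (0:ℝ)..1, (mlp 0 ρ) ^ 2) = 1) ∧
    (∀ α : ℕ, 1 ≤ α → (∫ ρ in (0:ℝ)..1, mlp 0 ρ * mlp α ρ) = (-1) ^ (α + 1)) ∧
    (∀ α β : ℕ, 1 ≤ α → 1 ≤ β →
      (∫ ρ in (0:ℝ)..1, mlp α ρ * mlp β ρ)
        = (if α = β then (1 : ℝ) / (2 * (α : ℝ) + 1) else 0) + (-1) ^ (α + β)) := by
  refine ⟨?_, fun α hα => ?_, fun α β hα hβ => ?_⟩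
  · simp only [mlp_zero, one_pow, intervalIntegral.integral_const, sub_zero, one_smul]
  · simp only [mlp_zero, one_mul, integral_mlp (Nat.one_le_iff_ne_zero.mp hα)]
  · exact integral_mlp_mul_mlp (Nat.one_le_iff_ne_zero.mp hα) (Nat.one_le_iff_ne_zero.mp hβ)
end

section
/- Let N ≥ 1, n ≥ 2, and let f = (f₁,…,f_{N+1}) ∈ ℝ^{N+1} with f₁ = 1, f_i ≥ 0 for i = 2,…,N+1, and Σ_{i=2}^{N+1} f_i = 1 (as for the Runge–Kutta basis, where f₂,…,f_{N+1} are the weights of an interpolatory quadrature, assumed nonnegative). Then 1 + 1/N ≤ |f|² ≤ 2, and consequently, with C_s ∈ ℝ^{(n−1)×n(N+1)} the block bidiagonal matrix whose j-th row carries f in columns (j−1)(N+1)+1,…,j(N+1) and −1 in column j(N+1)+1, every eigenvalue λ of C_sC_sᵀ satisfies 1/N ≤ λ ≤ 5. -/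
open Matrix
open scoped BigOperators

/-- The constraint matrix `C_s`: row `j` (for `j = 1,…,n-1`) carries the vector `f` in the
`j`-th block of `N+1` columns and the entry `-1` in the first column of block `j+1`.
Columns are indexed by pairs `(block, position in block)`. -/
def Cs (N n : ℕ) (f : Fin (N + 1) → ℝ) :
    Matrix (Fin (n - 1)) (Fin n × Fin (N + 1)) ℝ :=
  Matrix.of fun j q =>
    if (q.1 : ℕ) = (j : ℕ) then f q.2
    else if (q.1 : ℕ) = (j : ℕ) + 1 ∧ q.2 = 0 then -1 else 0

/-
Write each row of `C_s` as the difference of two vectors supported on one block each: `f` on block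
`j` and the first basis vector on block `j + 1`. Consequently `C_s C_sᵀ` is the tridiagonal Toeplitz
matrix with diagonal `|f|² + 1` and off-diagonal entries `-f₁` (`f₁` is `f 0` in Lean), and
Gershgorin's theorem puts every eigenvalue within `2|f₁|` of `|f|² + 1`. When `f₁ = 1` this is the
interval `[|f|² - 1, |f|² + 3]`, and Cauchy–Schwarz together with nonnegativity gives
`1 / N ≤ |f|² - 1 ≤ 1`.
-/

lemma sum_ite_le_of_subsingleton {ι M : Type*} [Fintype ι] [AddCommMonoid M] [PartialOrder M]
    [IsOrderedAddMonoid M] {p : ι → Prop} [DecidablePred p] (hp : {i | p i}.Subsingleton)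
    {x : M} (hx : 0 ≤ x) :
    ∑ i, (if p i then x else 0) ≤ x := by
  rw [← Finset.sum_filter, Finset.sum_const]
  have card_le_one : (Finset.univ.filter p).card ≤ 1 :=
    Finset.card_le_one.mpr fun i hi j hj =>
      hp (Finset.mem_filter.mp hi).2 (Finset.mem_filter.mp hj).2
  simpa only [one_nsmul] using nsmul_le_nsmul_left hx card_le_one

/-- The tridiagonal Toeplitz matrix of size `n`, with constant diagonal `a`, subdiagonal `b` and
superdiagonal `c`. It describes the Gram matrix of the rows of `Cs`. -/
def tridiagonalToeplitz {R : Type*} [Zero R] (n : ℕ) (a b c : R) : Matrix (Fin n) (Fin n) R :=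
  Matrix.of fun i j =>
    if i = j then a
    else if (i : ℕ) = j + 1 then b
    else if (j : ℕ) = i + 1 then c
    else 0

lemma sum_erase_norm_tridiagonalToeplitz_le {E : Type*} [SeminormedAddCommGroup E] {n : ℕ}
    (a b c : E) (i : Fin n) :
    ∑ j ∈ Finset.univ.erase i, ‖tridiagonalToeplitz n a b c i j‖ ≤ ‖b‖ + ‖c‖ := by
  calc ∑ j ∈ Finset.univ.erase i, ‖tridiagonalToeplitz n a b c i j‖
      ≤ ∑ j ∈ Finset.univ.erase i,
          ((if (i : ℕ) = j + 1 then ‖b‖ else 0) + if (j : ℕ) = i + 1 then ‖c‖ else 0) := by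
        refine Finset.sum_le_sum fun j hj => ?_
        rw [tridiagonalToeplitz, Matrix.of_apply, if_neg (Finset.ne_of_mem_erase hj).symm]
        split_ifs <;> simp
    _ ≤ ∑ j : Fin n, ((if (i : ℕ) = j + 1 then ‖b‖ else 0) + if (j : ℕ) = i + 1 then ‖c‖ else 0) :=
        Finset.sum_le_sum_of_subset_of_nonneg (Finset.erase_subset _ _)
          fun _ _ _ => by positivity
    _ ≤ ‖b‖ + ‖c‖ := by
        rw [Finset.sum_add_distrib]
        have subdiag : {j : Fin n | (i : ℕ) = j + 1}.Subsingleton :=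
          fun j (hj : (i : ℕ) = j + 1) k (hk : (i : ℕ) = k + 1) => by lia
        have superdiag : {j : Fin n | (j : ℕ) = i + 1}.Subsingleton :=
          fun j (hj : (j : ℕ) = i + 1) k (hk : (k : ℕ) = i + 1) => by lia
        exact add_le_add (sum_ite_le_of_subsingleton subdiag (norm_nonneg b))
          (sum_ite_le_of_subsingleton superdiag (norm_nonneg c))

lemma norm_eigenvalue_tridiagonalToeplitz_sub_le {K : Type*} [NormedField K] {n : ℕ}
    {a b c μ : K}
    (hμ : Module.End.HasEigenvalue (Matrix.toLin' (tridiagonalToeplitz n a b c)) μ) :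
    ‖μ - a‖ ≤ ‖b‖ + ‖c‖ := by
  obtain ⟨i, hi⟩ := eigenvalue_mem_ball hμ
  have diag : tridiagonalToeplitz n a b c i i = a := if_pos rfl
  rw [mem_closedBall_iff_norm, diag] at hi
  exact hi.trans (sum_erase_norm_tridiagonalToeplitz_le a b c i)

lemma sum_single_dotProduct_single {ι κ R : Type*} [Fintype ι] [DecidableEq ι] [Fintype κ]
    [NonUnitalNonAssocSemiring R] (i j : ι) (x y : κ → R) :
    ∑ k, (Pi.single i x : ι → κ → R) k ⬝ᵥ (Pi.single j y : ι → κ → R) k =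
      if i = j then x ⬝ᵥ y else 0 := by
  rw [Fintype.sum_eq_single i fun k hk => by rw [Pi.single_eq_of_ne hk, zero_dotProduct],
    Pi.single_eq_same, Pi.single_apply]
  split_ifs <;> simp

section ConstraintMatrix

variable (N : ℕ) (f : Fin (N + 1) → ℝ)

lemma curry_Cs_row (m : ℕ) (j : Fin m) :
    Function.curry (Cs N (m + 1) f j) =
      Pi.single j.castSucc f - Pi.single j.succ (Pi.single 0 1) := by
  ext b l
  simp only [Function.curry_apply, Cs, Matrix.of_apply, Pi.sub_apply, Pi.single_apply,
    Fin.ext_iff, Fin.val_castSucc, Fin.val_succ]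
  split_ifs <;> simp_all

lemma Cs_mul_transpose (n : ℕ) :
    Cs N n f * (Cs N n f)ᵀ =
      tridiagonalToeplitz (n - 1) (∑ l, f l ^ 2 + 1) (-f 0) (-f 0) := by
  obtain _ | m := n
  · ext i
    exact i.elim0
  ext i j
  have gram : (Cs N (m + 1) f * (Cs N (m + 1) f)ᵀ) i j =
      ∑ b, Function.curry (Cs N (m + 1) f i) b ⬝ᵥ Function.curry (Cs N (m + 1) f j) b :=
    Fintype.sum_prod_type _
  rw [gram, curry_Cs_row, curry_Cs_row]
  simp only [Pi.sub_apply, sub_dotProduct, dotProduct_sub, Finset.sum_sub_distrib,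
    sum_single_dotProduct_single]
  have norm_sq : f ⬝ᵥ f = ∑ l, f l ^ 2 := by simp only [dotProduct, sq]
  simp only [norm_sq, dotProduct_single_one, single_one_dotProduct, tridiagonalToeplitz,
    Matrix.of_apply, Fin.ext_iff, Fin.val_castSucc, Fin.val_succ, Pi.single_eq_same]
  split_ifs <;> first | lia | simp

lemma abs_eigenvalue_Cs_mul_transpose_sub_le {n : ℕ} {μ : ℝ}
    (hμ : Module.End.HasEigenvalue (Matrix.toLin' (Cs N n f * (Cs N n f)ᵀ)) μ) :
    |μ - (∑ l, f l ^ 2 + 1)| ≤ 2 * |f 0| := by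
  rw [Cs_mul_transpose] at hμ
  simpa only [Real.norm_eq_abs, abs_neg, ← two_mul] using
    norm_eigenvalue_tridiagonalToeplitz_sub_le hμ

end ConstraintMatrix

lemma one_div_card_le_sum_sq_of_sum_eq_one {ι R : Type*} [Fintype ι] [Field R] [LinearOrder R]
    [IsStrictOrderedRing R] {w : ι → R} (hw : ∑ i, w i = 1) :
    1 / (Fintype.card ι : R) ≤ ∑ i, w i ^ 2 := by
  refine div_le_of_le_mul₀ (Nat.cast_nonneg _) (Finset.sum_nonneg fun i _ => sq_nonneg (w i)) ?_
  simpa only [hw, one_pow, mul_comm, Finset.card_univ] using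
    sq_sum_le_card_mul_sum_sq (s := Finset.univ) (f := w)

theorem stmt13 (N n : ℕ) (hN : 1 ≤ N) (hn : 2 ≤ n)
    (f : Fin (N + 1) → ℝ) (hf0 : f 0 = 1)
    (hfnonneg : ∀ l : Fin N, 0 ≤ f l.succ)
    (hfsum : ∑ l : Fin N, f l.succ = 1) :
    (1 + 1 / (N : ℝ) ≤ ∑ l, f l ^ 2) ∧ (∑ l, f l ^ 2) ≤ 2 ∧
    (∀ (μ : ℝ) (v : Fin (n - 1) → ℝ), v ≠ 0 →
        (Cs N n f * (Cs N n f)ᵀ).mulVec v = μ • v →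
        1 / (N : ℝ) ≤ μ ∧ μ ≤ 5) := by
  have norm_sq : ∑ l, f l ^ 2 = 1 + ∑ l : Fin N, f l.succ ^ 2 := by
    rw [Fin.sum_univ_succ, hf0, one_pow]
  have lower : 1 / (N : ℝ) ≤ ∑ l : Fin N, f l.succ ^ 2 := by
    simpa only [Fintype.card_fin] using one_div_card_le_sum_sq_of_sum_eq_one hfsum
  have upper : ∑ l : Fin N, f l.succ ^ 2 ≤ 1 := by
    simpa only [hfsum, one_pow] using
      Finset.sum_sq_le_sq_sum_of_nonneg (s := Finset.univ) fun l _ => hfnonneg l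
  refine ⟨by linarith, by linarith, fun μ v hv hμv => ?_⟩
  have hμ : Module.End.HasEigenvalue (Matrix.toLin' (Cs N n f * (Cs N n f)ᵀ)) μ :=
    Module.End.hasEigenvalue_of_hasEigenvector ⟨Module.End.mem_eigenspace_iff.mpr hμv, hv⟩
  have dist_le := abs_le.mp (abs_eigenvalue_Cs_mul_transpose_sub_le N f hμ)
  rw [hf0, abs_one] at dist_le
  constructor <;> linarith
end
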